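/- arXiv:0912.3186 — 2 statements merged into one kernel-verified Lean document; each statement's English description precedes it below -/
import Mathlib

section
/- Let 2 ≤ a ≤ b ≤ c be integers and h(p,q,r) = (p + q + r − 1)/min(ap, bq, cr) for positive integer triples (p,q,r). Then there exists a triple of the form (p, q, 1) with p, q positive and gcd(p,q) = 1 attaining the infimum of h over all positive integer triples, i.e., min over positive integer (p,q,r) of h(p,q,r) = min over coprime positive (p,q) of h(p,q,1). -/
/-- The candidate canonical threshold of the Brieskorn singularity
`x^a + y^b + z^c = 0` computed at the weight vector `(p, q, r)`. -/
noncomputable def brieskornH (a b c p q r : ℕ) : ℝ :=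
  ((p : ℝ) + q + r - 1) / min ((a : ℝ) * p) (min ((b : ℝ) * q) ((c : ℝ) * r))

/-- The set of values of `brieskornH a b c` over all positive integer weight triples. -/
def brieskornVals (a b c : ℕ) : Set ℝ :=
  {x | ∃ p q r : ℕ, 0 < p ∧ 0 < q ∧ 0 < r ∧ x = brieskornH a b c p q r}

/-- Farey-type bracket, by descent on the mediant. -/
lemma brieskorn_farey (α β γ : ℝ) (hα : α ≤ 2)
    (H : ∀ p q : ℤ, 0 < p → 0 < q → α * p ≤ p + q ∨ β * q ≤ p + q ∨ γ ≤ p + q) (n : ℕ) :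
    ∃ w u w' u' : ℤ, 1 ≤ w ∧ 0 ≤ u ∧ 1 ≤ u' ∧ u' ≤ w' ∧ u' * w - u * w' = 1 ∧
      β * u ≤ w + u ∧ α * w' ≤ w' + u' ∧
      (γ ≤ w + u + w' + u' ∨ (n : ℤ) ≤ w + u + w' + u') := by
  induction n with
  | zero =>
    refine ⟨1, 0, 1, 1, by norm_num, by norm_num, by norm_num, by norm_num, by norm_num,
      by norm_num, by push_cast; linarith, Or.inr (by norm_num)⟩
  | succ n ih =>
    obtain ⟨w, u, w', u', h1, h2, h3, h4, h5, h6, h7, h8⟩ := ih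
    rcases h8 with h8 | h8
    · exact ⟨w, u, w', u', h1, h2, h3, h4, h5, h6, h7, Or.inl h8⟩
    · rcases H (w + w') (u + u') (by omega) (by omega) with h | h | h
      · refine ⟨w, u, w + w', u + u', h1, h2, by omega, ?_, by linarith, h6, ?_, Or.inr ?_⟩
        · rcases eq_or_lt_of_le h2 with h0 | h0
          · rw [← h0]; omega
          · by_contra hc
            push Not at hc
            have hwu : w < u := by omega
            nlinarith
        · push_cast at h ⊢; linarith
        · push_cast; omega
      · refine ⟨w + w', u + u', w', u', by omega, by omega, h3, h4, by linarith, ?_, h7, Or.inr ?_⟩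
        · push_cast at h ⊢; linarith
        · push_cast; omega
      · refine ⟨w, u, w', u', h1, h2, h3, h4, h5, h6, h7, Or.inl ?_⟩
        push_cast at h; linarith

lemma brieskorn_key (α β γ : ℝ) (hα : α ≤ 2) (hβγ : β ≤ γ)
    (H : ∀ p q : ℤ, 0 < p → 0 < q → α * p ≤ p + q ∨ β * q ≤ p + q ∨ γ ≤ p + q)
    (p q r : ℤ) (hp : 0 < p) (hq : 0 < q) (hr : 2 ≤ r)
    (k1 : (p : ℝ) + q + r - 1 < α * p) (k2 : (p : ℝ) + q + r - 1 < β * q)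
    (k3 : (p : ℝ) + q + r - 1 < γ * r) : False := by
  obtain ⟨n, hn⟩ := exists_nat_ge γ
  obtain ⟨w, u, w', u', h1, h2, h3, h4, h5, h6, h7, h8⟩ := brieskorn_farey α β γ hα H n
  have h9 : γ ≤ ((w + u + (w' + u') : ℤ) : ℝ) := by
    rcases h8 with h8 | h8
    · push_cast; linarith
    · have : ((n : ℤ) : ℝ) ≤ ((w + u + w' + u' : ℤ) : ℝ) := by exact_mod_cast h8
      push_cast at this ⊢; linarith
  obtain ⟨S, hS⟩ : ∃ S : ℤ, S = p + q + r - 1 := ⟨_, rfl⟩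
  obtain ⟨v, hv⟩ : ∃ v : ℤ, v = w + u := ⟨_, rfl⟩
  obtain ⟨v', hv'⟩ : ∃ v' : ℤ, v' = w' + u' := ⟨_, rfl⟩
  have hSr : (S : ℝ) = p + q + r - 1 := by rw [hS]; push_cast; ring
  rw [← hSr] at k1 k2 k3
  have hvr : (w : ℝ) + u = v := by rw [hv]; push_cast; ring
  have hvr' : (w' : ℝ) + u' = v' := by rw [hv']; push_cast; ring
  rw [hvr] at h6
  rw [hvr'] at h7
  rw [← hv, ← hv'] at h9
  have hqR : (0 : ℝ) < q := by exact_mod_cast hq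
  have hpR : (0 : ℝ) < p := by exact_mod_cast hp
  have hrR : (0 : ℝ) < r := by exact_mod_cast (by omega : 0 < r)
  have e1 : 1 ≤ q * v - u * S := by
    rcases eq_or_lt_of_le h2 with h0 | h0
    · rw [← h0]; nlinarith
    · have h0R : (0 : ℝ) < u := by exact_mod_cast h0
      have : (u : ℝ) * S < q * v := by nlinarith
      have : u * S < q * v := by exact_mod_cast this
      omega
  have e2 : 1 ≤ p * v' - w' * S := by
    have h0R : (0 : ℝ) < w' := by exact_mod_cast (by omega : 0 < w')
    have : (w' : ℝ) * S < p * v' := by nlinarith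
    have : w' * S < p * v' := by exact_mod_cast this
    omega
  have e3 : S < (v + v') * r := by
    have : (S : ℝ) < ((v + v' : ℤ) : ℝ) * r := by nlinarith
    exact_mod_cast this
  have e4 : S < (v + v') * q := by
    have : (S : ℝ) < ((v + v' : ℤ) : ℝ) * q := by nlinarith
    exact_mod_cast this
  have e5 : S = v * (p * v' - w' * S) + v' * (q * v - u * S) + (r - 1) * (v * v') := by
    have : S * (u' * w - u * w') = S := by rw [h5, mul_one]
    have hp' : p = S - q - r + 1 := by omega
    rw [hp']
    have hu' : u' = v' - w' := by omega
    have hw : w = v - u := by omega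
    rw [hu', hw] at this
    linarith
  have hv2 : 2 ≤ v' := by omega
  have hv1 : 1 ≤ v := by omega
  rcases eq_or_lt_of_le hv1 with hv0 | hv0
  · have hw1 : w = 1 := by omega
    have hu0 : u = 0 := by omega
    subst hw1 hu0
    rw [← hv0] at e3 e4 e5 e1
    have e6 : (q + r - 1) * v' < S := by nlinarith
    rcases le_total q r with hqr | hqr
    · nlinarith
    · nlinarith
  · have : v + v' ≤ v * v' := by nlinarith
    nlinarith

lemma brieskorn_min_pos (a b c p q r : ℕ) (ha : 0 < a) (hb : 0 < b) (hc : 0 < c)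
    (hp : 0 < p) (hq : 0 < q) (hr : 0 < r) :
    0 < min ((a : ℝ) * p) (min ((b : ℝ) * q) ((c : ℝ) * r)) := by
  refine lt_min ?_ (lt_min ?_ ?_) <;> positivity

/-- The minimum of `brieskornH` over all positive integer weight triples can be
attained at a triple of the form `(p, q, 1)` with `p`, `q` coprime. -/
theorem brieskorn_min_weight_r_eq_one (a b c : ℕ) (ha : 2 ≤ a) (hab : a ≤ b) (hbc : b ≤ c) :
    ∃ p q : ℕ, 0 < p ∧ 0 < q ∧ Nat.Coprime p q ∧
      IsLeast (brieskornVals a b c) (brieskornH a b c p q 1) := by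
  have hb : 2 ≤ b := ha.trans hab
  have hc : 2 ≤ c := hb.trans hbc
  -- a minimiser among the triples `(p, q, 1)` with `p, q ≤ c`
  obtain ⟨⟨p0, q0⟩, hmem, hmin⟩ := Finset.exists_min_image (Finset.Icc 1 c ×ˢ Finset.Icc 1 c)
    (fun x : ℕ × ℕ => brieskornH a b c x.1 x.2 1) ⟨(1, 1), by simp; omega⟩
  simp only [Finset.mem_product, Finset.mem_Icc] at hmem hmin
  obtain ⟨⟨hp1, -⟩, hq1, -⟩ := hmem
  obtain ⟨L, hL⟩ : ∃ L, L = brieskornH a b c p0 q0 1 := ⟨_, rfl⟩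
  rw [← hL] at hmin
  have haR : (2 : ℝ) ≤ a := by exact_mod_cast ha
  have habR : (a : ℝ) ≤ b := by exact_mod_cast hab
  have hbcR : (b : ℝ) ≤ c := by exact_mod_cast hbc
  have hLpos : 0 < L := by
    rw [hL, brieskornH]
    apply div_pos
    · have : (1 : ℝ) ≤ p0 := by exact_mod_cast hp1
      have : (1 : ℝ) ≤ q0 := by exact_mod_cast hq1
      push_cast; linarith
    · exact brieskorn_min_pos a b c p0 q0 1 (by omega) (by omega) (by omega) hp1 hq1 one_pos
  have H0 : ∀ p q : ℕ, 0 < p → 0 < q →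
      L * min ((a : ℝ) * p) (min ((b : ℝ) * q) c) ≤ p + q := by
    intro p q hp hq
    have h := hmin (min p c, min q c) ⟨⟨by simp; omega, by simp⟩, by simp; omega, by simp⟩
    have hpos := brieskorn_min_pos a b c (min p c) (min q c) 1 (by omega) (by omega) (by omega)
      (by simp; omega) (by simp; omega) one_pos
    simp only [brieskornH] at h
    rw [le_div_iff₀ hpos] at h
    have hle : min ((a : ℝ) * p) (min ((b : ℝ) * q) c) ≤
        min ((a : ℝ) * (min p c : ℕ)) (min ((b : ℝ) * (min q c : ℕ)) ((c : ℝ) * (1 : ℕ))) := by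
      have hc0 : (0 : ℝ) ≤ c := by positivity
      refine le_min ?_ (le_min ?_ ?_)
      · rcases le_total p c with hh | hh
        · rw [min_eq_left hh]; exact min_le_left _ _
        · rw [min_eq_right hh]
          exact ((min_le_right _ _).trans (min_le_right _ _)).trans (by nlinarith)
      · rcases le_total q c with hh | hh
        · rw [min_eq_left hh]; exact (min_le_right _ _).trans (min_le_left _ _)
        · rw [min_eq_right hh]
          exact ((min_le_right _ _).trans (min_le_right _ _)).trans (by nlinarith)
      · exact ((min_le_right _ _).trans (min_le_right _ _)).trans (by simp)
    have h2 := mul_le_mul_of_nonneg_left hle hLpos.le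
    have h3 : ((min p c : ℕ) : ℝ) ≤ p := by exact_mod_cast min_le_left _ _
    have h4 : ((min q c : ℕ) : ℝ) ≤ q := by exact_mod_cast min_le_left _ _
    push_cast at h h2 h3 h4 ⊢
    linarith
  have H1 : ∀ p q : ℤ, 0 < p → 0 < q →
      L * a * p ≤ p + q ∨ L * b * q ≤ p + q ∨ L * c ≤ p + q := by
    intro p q hp hq
    lift p to ℕ using hp.le
    lift q to ℕ using hq.le
    have h := H0 p q (by omega) (by omega)
    by_contra! hcon
    obtain ⟨c1, c2, c3⟩ := hcon
    push_cast at c1 c2 c3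
    rcases min_choice ((a : ℝ) * p) (min ((b : ℝ) * q) c) with e | e
    · rw [e] at h; linarith
    · rw [e] at h
      rcases min_choice ((b : ℝ) * q) (c : ℝ) with e | e <;> rw [e] at h <;> linarith
  have hα : L * a ≤ 2 := by
    have h := H0 1 1 one_pos one_pos
    push_cast at h
    rw [mul_one, mul_one, min_eq_left hbcR, min_eq_left habR] at h
    linarith
  have hβγ : L * b ≤ L * c := mul_le_mul_of_nonneg_left hbcR hLpos.le
  have main : ∀ p q r : ℕ, 0 < p → 0 < q → 0 < r → L ≤ brieskornH a b c p q r := by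
    intro p q r hp hq hr
    rw [brieskornH, le_div_iff₀
      (brieskorn_min_pos a b c p q r (by omega) (by omega) (by omega) hp hq hr)]
    by_cases hr1 : r = 1
    · subst hr1
      have := H0 p q hp hq
      push_cast
      rw [mul_one]
      linarith
    · by_contra! hcon
      have g1 := mul_le_mul_of_nonneg_left
        (min_le_left ((a : ℝ) * p) (min ((b : ℝ) * q) ((c : ℝ) * r))) hLpos.le
      have g2 := mul_le_mul_of_nonneg_left ((min_le_right ((a : ℝ) * p)
        (min ((b : ℝ) * q) ((c : ℝ) * r))).trans (min_le_left _ _)) hLpos.le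
      have g3 := mul_le_mul_of_nonneg_left ((min_le_right ((a : ℝ) * p)
        (min ((b : ℝ) * q) ((c : ℝ) * r))).trans (min_le_right _ _)) hLpos.le
      refine brieskorn_key (L * a) (L * b) (L * c) hα hβγ H1 p q r (by omega) (by omega)
        (by omega) ?_ ?_ ?_ <;> push_cast <;> linarith
  -- pass to a coprime pair
  obtain ⟨g, p, q, hg, hcop, ep, eq⟩ := Nat.exists_coprime' (m := p0) (n := q0)
    (Nat.gcd_pos_of_pos_left _ hp1)
  have hp : 0 < p := by
    rcases Nat.eq_zero_or_pos p with h | h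
    · subst h; omega
    · exact h
  have hq : 0 < q := by
    rcases Nat.eq_zero_or_pos q with h | h
    · subst h; omega
    · exact h
  refine ⟨p, q, hp, hq, hcop, ⟨p, q, 1, hp, hq, one_pos, rfl⟩, ?_⟩
  rintro x ⟨p', q', r', hp', hq', hr', rfl⟩
  refine le_trans ?_ (main p' q' r' hp' hq' hr')
  have hgR : (1 : ℝ) ≤ g := by exact_mod_cast hg
  have hpos := brieskorn_min_pos a b c p q 1 (by omega) (by omega) (by omega) hp hq one_pos
  have hpos0 := brieskorn_min_pos a b c p0 q0 1 (by omega) (by omega) (by omega) hp1 hq1 one_pos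
  rw [hL, brieskornH, brieskornH, div_le_div_iff₀ hpos hpos0]
  have hle : min ((a : ℝ) * p0) (min ((b : ℝ) * q0) ((c : ℝ) * (1 : ℕ))) ≤
      g * min ((a : ℝ) * p) (min ((b : ℝ) * q) ((c : ℝ) * (1 : ℕ))) := by
    have hg0 : (0 : ℝ) ≤ g := by linarith
    rw [mul_min_of_nonneg _ _ hg0, mul_min_of_nonneg _ _ hg0]
    refine min_le_min ?_ (min_le_min ?_ ?_)
    · rw [ep]; push_cast; linarith
    · rw [eq]; push_cast; linarith
    · push_cast; nlinarith
  have hs : (0 : ℝ) ≤ (p : ℝ) + q := by positivity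
  have e0 : (p0 : ℝ) = p * g := by exact_mod_cast ep
  have e1 : (q0 : ℝ) = q * g := by exact_mod_cast eq
  have := mul_le_mul_of_nonneg_left hle hs
  calc _ = ((p : ℝ) + q) * min ((a : ℝ) * p0) (min ((b : ℝ) * q0) ((c : ℝ) * (1 : ℕ))) := by
        push_cast; ring
    _ ≤ _ := this
    _ = _ := by rw [e0, e1]; push_cast; ring
end

section
/- Let 2 ≤ a ≤ b ≤ c be integers with c < lcm(a,b), and define s₁ = min over 1 ≤ k ≤ ⌊c/b⌋ of (1/b + ⌈kb/a⌉/(kb)), s₂ = min over 1 ≤ k ≤ ⌊c/a⌋ of (1/a + ⌈ka/b⌉/(ka)), and s₃ = (⌈c/a⌉ + ⌈c/b⌉)/c. Then the minimum over all positive integer triples (p,q,r) of (p + q + r − 1)/min(ap, bq, cr), capped at 1, equals min(s₁, s₂, s₃, 1). -/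
/-- Farey neighbours of `b / a` that are maximal with respect to the bound `c`. -/
theorem farey_step (a b c : ℕ) (ha : 0 < a) (hb : 0 < b) (N : ℕ) :
    ∀ j1 n1 j2 n2 : ℕ, 0 < j1 → 0 < n1 → 0 < j2 → 0 < n2 → n1 * j2 = j1 * n2 + 1 → n1 ≤ j1 → n2 ≤ j2 →
      j1 * a ≤ n1 * b → j1 * a ≤ c → n2 * b ≤ j2 * a → n2 * b ≤ c →
      2 * c < N + (j1 + n2) →
    ∃ j1 n1 j2 n2 : ℕ, 0 < j1 ∧ 0 < n1 ∧ 0 < j2 ∧ 0 < n2 ∧ n1 * j2 = j1 * n2 + 1 ∧ n1 ≤ j1 ∧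
      j1 * a ≤ n1 * b ∧ j1 * a ≤ c ∧ n2 * b ≤ j2 * a ∧ n2 * b ≤ c ∧
      ((c < (n1 + n2) * b ∧ (n1 + n2) * b ≤ (j1 + j2) * a) ∨
        (c < (j1 + j2) * a ∧ (j1 + j2) * a ≤ (n1 + n2) * b)) := by
  induction N with
  | zero =>
    intro j1 n1 j2 n2 _ _ _ _ _ _ _ _ h1 _ h2 h3
    exfalso
    have := Nat.le_mul_of_pos_right j1 ha
    have := Nat.le_mul_of_pos_right n2 hb
    omega
  | succ N ih =>
    intro j1 n1 j2 n2 p1 p2 p3 p4 hd g1 g2 h1 h2 h3 h4 hN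
    rcases le_total ((n1 + n2) * b) ((j1 + j2) * a) with h | h
    · by_cases hc : c < (n1 + n2) * b
      · exact ⟨j1, n1, j2, n2, p1, p2, p3, p4, hd, g1, h1, h2, h3, h4, Or.inl ⟨hc, h⟩⟩
      · exact ih j1 n1 (j1 + j2) (n1 + n2) p1 p2 (by omega) (by omega) (by nlinarith) g1 (by omega) h1 h2 h
          (by omega) (by omega)
    · by_cases hc : c < (j1 + j2) * a
      · exact ⟨j1, n1, j2, n2, p1, p2, p3, p4, hd, g1, h1, h2, h3, h4, Or.inr ⟨hc, h⟩⟩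
      · exact ih (j1 + j2) (n1 + n2) j2 n2 (by omega) (by omega) p3 p4 (by nlinarith) (by omega) g2 h
          (by omega) h3 h4 (by omega)

theorem farey_exists (a b c : ℕ) (ha : 0 < a) (hab : a ≤ b) (hbc : b ≤ c) :
    ∃ j1 n1 j2 n2 : ℕ, 0 < j1 ∧ 0 < n1 ∧ 0 < j2 ∧ 0 < n2 ∧ n1 * j2 = j1 * n2 + 1 ∧ n1 ≤ j1 ∧
      j1 * a ≤ n1 * b ∧ j1 * a ≤ c ∧ n2 * b ≤ j2 * a ∧ n2 * b ≤ c ∧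
      ((c < (n1 + n2) * b ∧ (n1 + n2) * b ≤ (j1 + j2) * a) ∨
        (c < (j1 + j2) * a ∧ (j1 + j2) * a ≤ (n1 + n2) * b)) := by
  have h1 : b / a * a ≤ b := Nat.div_mul_le_self b a
  have h2 : b < (b / a + 1) * a := by
    have := Nat.lt_div_mul_add (a := b) ha
    nlinarith
  have h3 : 0 < b / a := Nat.div_pos hab ha
  generalize b / a = u at h1 h2 h3
  refine farey_step a b c ha (by omega) (2 * c + 1) u 1 (u + 1) 1
    h3 one_pos (by omega) one_pos (by ring) (by omega) (by omega) (by omega) (by omega) (by omega)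
    (by omega) (by omega)

theorem exists_ceil (a m : ℕ) (ha : 0 < a) : ∃ j : ℕ, m ≤ j * a ∧ j * a < m + a := by
  refine ⟨(m + a - 1) / a, ?_, ?_⟩
  · have := Nat.lt_div_mul_add (a := m + a - 1) ha
    omega
  · have := Nat.div_mul_le_self (m + a - 1) a
    omega

/-- The combinatorial heart: weights with `r ≥ 2` are never better. -/
theorem core (a b c : ℕ) (ha : 0 < a) (hab : a ≤ b) (hbc : b ≤ c) (D : ℝ) (hD : 0 ≤ D)
    (H1 : ∀ k j : ℕ, 1 ≤ k → k * b ≤ c → k * b ≤ j * a → D * (k * b : ℕ) ≤ j + k)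
    (H2 : ∀ k n : ℕ, 1 ≤ k → k * a ≤ c → k * a ≤ n * b → D * (k * a : ℕ) ≤ k + n)
    (H3 : ∀ j n : ℕ, c ≤ j * a → c ≤ n * b → D * c ≤ j + n)
    (m p q s : ℕ) (hp : m ≤ p * a) (hq : m ≤ q * b) (hs1 : 1 ≤ s) (hs : m ≤ (s + 1) * c) :
    D * m ≤ p + q + s := by
  have hb : 0 < b := by omega
  obtain ⟨j, hj, hj'⟩ := exists_ceil a m ha
  obtain ⟨n, hn, hn'⟩ := exists_ceil b m hb
  have hjp : j ≤ p := by
    have : j * a < (p + 1) * a := by nlinarith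
    have := Nat.lt_of_mul_lt_mul_right this
    omega
  have hnq : n ≤ q := by
    have : n * b < (q + 1) * b := by nlinarith
    have := Nat.lt_of_mul_lt_mul_right this
    omega
  suffices h : D * m ≤ j + n + s by
    have e1 : (j : ℝ) ≤ p := by exact_mod_cast hjp
    have e2 : (n : ℝ) ≤ q := by exact_mod_cast hnq
    linarith
  obtain ⟨j1, n1, j2, n2, p1, p2, p3, p4, hd, g1, h1, h2, h3, h4, h5⟩ := farey_exists a b c ha hab hbc
  have B1 := H2 j1 n1 p1 h2 h1
  have B2 := H1 n2 j2 p4 h4 h3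
  have hmj : D * m ≤ D * (j * a) := by
    apply mul_le_mul_of_nonneg_left _ hD
    exact_mod_cast hj
  have hmn : D * m ≤ D * (n * b) := by
    apply mul_le_mul_of_nonneg_left _ hD
    exact_mod_cast hn
  push_cast at B1 B2
  by_cases hy : j * n1 ≤ n * j1 + j1 * s
  · have hy' : (j : ℝ) * n1 ≤ n * j1 + j1 * s := by exact_mod_cast hy
    have p1' : (0 : ℝ) < j1 := by exact_mod_cast p1
    have := mul_le_mul_of_nonneg_left B1 (Nat.cast_nonneg (α := ℝ) j)
    have h6 := mul_le_mul_of_nonneg_left hmj p1'.le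
    refine le_of_mul_le_mul_left ?_ p1'
    nlinarith
  by_cases hx : n * j2 ≤ j * n2 + n2 * s
  · have hx' : (n : ℝ) * j2 ≤ j * n2 + n2 * s := by exact_mod_cast hx
    have p4' : (0 : ℝ) < n2 := by exact_mod_cast p4
    have := mul_le_mul_of_nonneg_left B2 (Nat.cast_nonneg (α := ℝ) n)
    have h6 := mul_le_mul_of_nonneg_left hmn p4'.le
    refine le_of_mul_le_mul_left ?_ p4'
    nlinarith
  push Not at hx hy
  obtain ⟨y, hy⟩ := Nat.exists_eq_add_of_lt hy
  obtain ⟨x, hx⟩ := Nat.exists_eq_add_of_lt hx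
  -- actual lattice coordinates
  have en : n = (n2 * s + x + 1) * n1 + (j1 * s + y + 1) * n2 := by
    zify at *
    linear_combination n1 * hx + n2 * hy - n * hd
  have ej : j = (n2 * s + x + 1) * j1 + (j1 * s + y + 1) * j2 := by
    zify at *
    linear_combination j1 * hx + j2 * hy - j * hd
  have key : j1 = 1 ∧ n2 = 1 := by
    rcases h5 with ⟨h5, h6⟩ | ⟨h5, h6⟩
    · have l0 := Nat.mul_le_mul_left (s + 1) h5.le
      have l1 : n * b < ((s + 1) * (n1 + n2) + 1) * b := by linarith
      have l2 := Nat.lt_of_mul_lt_mul_right l1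
      have l3 : s * (n2 * (n1 + j1)) ≤ s * (n1 + n2) := by
        linarith [Nat.zero_le (x * n1), Nat.zero_le (y * n2)]
      have l4 := Nat.le_of_mul_le_mul_left l3 hs1
      have l5 : n2 = 1 := by
        by_contra hne
        have t : 2 ≤ n2 := by omega
        have t1 := Nat.mul_le_mul_right n1 t
        have t2 := Nat.mul_le_mul_left n2 p1
        linarith
      subst l5
      omega
    · have l0 := Nat.mul_le_mul_left (s + 1) h5.le
      have l1 : j * a < ((s + 1) * (j1 + j2) + 1) * a := by linarith
      have l2 := Nat.lt_of_mul_lt_mul_right l1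
      have l3 : s * (j1 * (n2 + j2)) ≤ s * (j1 + j2) := by
        linarith [Nat.zero_le (x * j1), Nat.zero_le (y * j2)]
      have l4 := Nat.le_of_mul_le_mul_left l3 hs1
      have l5 : j1 = 1 := by
        by_contra hne
        have t : 2 ≤ j1 := by omega
        have t1 := Nat.mul_le_mul_right j2 t
        have t2 := Nat.mul_le_mul_left j1 p4
        linarith
      subst l5
      omega
  obtain ⟨rfl, rfl⟩ := key
  have k1 : n1 = 1 := by omega
  subst k1
  have k2 : j2 = 2 := by omega
  subst k2
  have h7 : c ≤ 3 * a ∧ c ≤ 2 * b := by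
    rcases h5 with ⟨h5, h6⟩ | ⟨h5, h6⟩ <;> constructor <;> omega
  have B3 := H3 3 2 h7.1 h7.2
  have ej2 : 3 * (s + 1) ≤ j := by rw [ej]; linarith
  have en2 : 2 * (s + 1) ≤ n := by rw [en]; linarith
  have ej3 : (3 * (s + 1) : ℝ) ≤ j := by exact_mod_cast ej2
  have en3 : (2 * (s + 1) : ℝ) ≤ n := by exact_mod_cast en2
  have hs' : (m : ℝ) ≤ (s + 1) * c := by exact_mod_cast hs
  have := mul_le_mul_of_nonneg_left hs' hD
  have hs0 : (0 : ℝ) ≤ s := Nat.cast_nonneg s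
  push_cast at B3
  nlinarith

theorem brieskorn_ct_formula (a b c : ℕ) (ha : 2 ≤ a) (hab : a ≤ b) (hbc : b ≤ c)
    (hlcm : c < Nat.lcm a b)
    (s₁ s₂ s₃ : ℝ)
    (hs₁ : s₁ = sInf {x : ℝ | ∃ k : ℕ, 1 ≤ k ∧ k ≤ c / b ∧
      x = 1 / (b : ℝ) + (⌈((k * b : ℕ) : ℝ) / (a : ℝ)⌉ : ℝ) / ((k * b : ℕ) : ℝ)})
    (hs₂ : s₂ = sInf {x : ℝ | ∃ k : ℕ, 1 ≤ k ∧ k ≤ c / a ∧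
      x = 1 / (a : ℝ) + (⌈((k * a : ℕ) : ℝ) / (b : ℝ)⌉ : ℝ) / ((k * a : ℕ) : ℝ)})
    (hs₃ : s₃ = ((⌈(c : ℝ) / (a : ℝ)⌉ : ℝ) + (⌈(c : ℝ) / (b : ℝ)⌉ : ℝ)) / (c : ℝ)) :
    min (sInf (brieskornVals a b c)) 1 = min (min s₁ s₂) (min s₃ 1) := by
  have ha0 : 0 < a := by omega
  have hb0 : 0 < b := by omega
  have hc0 : 0 < c := by omega
  have haR : (0 : ℝ) < a := by exact_mod_cast ha0
  have hbR : (0 : ℝ) < b := by exact_mod_cast hb0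
  have hcR : (0 : ℝ) < c := by exact_mod_cast hc0
  have bdd1 : ∀ x ∈ {x : ℝ | ∃ k : ℕ, 1 ≤ k ∧ k ≤ c / b ∧
      x = 1 / (b : ℝ) + (⌈((k * b : ℕ) : ℝ) / (a : ℝ)⌉ : ℝ) / ((k * b : ℕ) : ℝ)}, 0 ≤ x := by
    rintro x ⟨k, -, -, rfl⟩
    have : (0 : ℝ) ≤ (⌈((k * b : ℕ) : ℝ) / (a : ℝ)⌉ : ℝ) := by
      exact_mod_cast Int.ceil_nonneg (by positivity)
    positivity
  have bdd2 : ∀ x ∈ {x : ℝ | ∃ k : ℕ, 1 ≤ k ∧ k ≤ c / a ∧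
      x = 1 / (a : ℝ) + (⌈((k * a : ℕ) : ℝ) / (b : ℝ)⌉ : ℝ) / ((k * a : ℕ) : ℝ)}, 0 ≤ x := by
    rintro x ⟨k, -, -, rfl⟩
    have : (0 : ℝ) ≤ (⌈((k * a : ℕ) : ℝ) / (b : ℝ)⌉ : ℝ) := by
      exact_mod_cast Int.ceil_nonneg (by positivity)
    positivity
  have s1nn : 0 ≤ s₁ := by rw [hs₁]; exact Real.sInf_nonneg bdd1
  have s2nn : 0 ≤ s₂ := by rw [hs₂]; exact Real.sInf_nonneg bdd2
  have s3nn : 0 ≤ s₃ := by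
    rw [hs₃]
    have e1 : (0 : ℝ) ≤ (⌈(c : ℝ) / (a : ℝ)⌉ : ℝ) := by
      exact_mod_cast Int.ceil_nonneg (by positivity)
    have e2 : (0 : ℝ) ≤ (⌈(c : ℝ) / (b : ℝ)⌉ : ℝ) := by
      exact_mod_cast Int.ceil_nonneg (by positivity)
    positivity
  have ceil_le' : ∀ t d j : ℕ, 0 < d → t ≤ j * d → (⌈(t : ℝ) / (d : ℝ)⌉ : ℝ) ≤ j := by
    intro t d j hd h
    have hdR : (0 : ℝ) < d := by exact_mod_cast hd
    have : ⌈(t : ℝ) / (d : ℝ)⌉ ≤ (j : ℤ) := by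
      rw [Int.ceil_le, div_le_iff₀ hdR]
      exact_mod_cast h
    exact_mod_cast this
  have ceil_nat : ∀ t d : ℕ, 0 < d → 0 < t → ∃ j : ℕ, 0 < j ∧ t ≤ j * d ∧
      (⌈(t : ℝ) / (d : ℝ)⌉ : ℝ) = j := by
    intro t d hd ht
    have hdR : (0 : ℝ) < d := by exact_mod_cast hd
    have htR : (0 : ℝ) < t := by exact_mod_cast ht
    have hpos : 0 < ⌈(t : ℝ) / (d : ℝ)⌉ := Int.ceil_pos.mpr (by positivity)
    obtain ⟨j, hj⟩ := Int.eq_ofNat_of_zero_le hpos.le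
    refine ⟨j, by omega, ?_, by rw [hj]; simp⟩
    have := Int.le_ceil ((t : ℝ) / (d : ℝ))
    rw [hj, div_le_iff₀ hdR] at this
    exact_mod_cast this
  have bddV : BddBelow (brieskornVals a b c) := by
    refine ⟨0, ?_⟩
    rintro x ⟨p, q, r, hp, hq, hr, rfl⟩
    unfold brieskornH
    have : (1 : ℝ) ≤ p := by exact_mod_cast hp
    have : (0 : ℝ) ≤ (p : ℝ) + q + r - 1 := by
      have : (0 : ℝ) ≤ q := by positivity
      have : (0 : ℝ) ≤ r := by positivity
      linarith
    positivity
  have neV : (brieskornVals a b c).Nonempty := ⟨_, 1, 1, 1, one_pos, one_pos, one_pos, rfl⟩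
  apply le_antisymm
  · refine le_min (le_min ?_ ?_) (le_min ?_ (min_le_right _ _))
    · refine (min_le_left _ _).trans ?_
      rw [hs₁]
      refine le_csInf ⟨_, 1, le_refl _, Nat.div_pos hbc hb0, rfl⟩ ?_
      rintro x ⟨k, hk1, hk2, rfl⟩
      have hkc : k * b ≤ c := (Nat.le_div_iff_mul_le hb0).1 hk2
      have hkR : (0 : ℝ) < k := by exact_mod_cast hk1
      obtain ⟨j, hj0, hj, hje⟩ := ceil_nat (k * b) a ha0 (by positivity)
      rw [hje]
      refine csInf_le bddV ⟨j, k, 1, hj0, hk1, one_pos, ?_⟩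
      unfold brieskornH
      have hkcR : (b : ℝ) * k ≤ c * (1 : ℕ) := by push_cast; rw [mul_comm, mul_one]; exact_mod_cast hkc
      have hjR : (b : ℝ) * k ≤ a * j := by rw [mul_comm, mul_comm (a : ℝ)]; exact_mod_cast hj
      rw [min_eq_left hkcR, min_eq_right hjR]
      push_cast
      field_simp
      ring
    · refine (min_le_left _ _).trans ?_
      rw [hs₂]
      refine le_csInf ⟨_, 1, le_refl _, Nat.div_pos (hab.trans hbc) ha0, rfl⟩ ?_
      rintro x ⟨k, hk1, hk2, rfl⟩
      have hkc : k * a ≤ c := (Nat.le_div_iff_mul_le ha0).1 hk2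
      have hkR : (0 : ℝ) < k := by exact_mod_cast hk1
      obtain ⟨j, hj0, hj, hje⟩ := ceil_nat (k * a) b hb0 (by positivity)
      rw [hje]
      refine csInf_le bddV ⟨k, j, 1, hk1, hj0, one_pos, ?_⟩
      unfold brieskornH
      have hkcR : (a : ℝ) * k ≤ c * (1 : ℕ) := by push_cast; rw [mul_comm, mul_one]; exact_mod_cast hkc
      have hjR : (a : ℝ) * k ≤ b * j := by rw [mul_comm, mul_comm (b : ℝ)]; exact_mod_cast hj
      rw [min_eq_left (le_min hjR hkcR)]
      push_cast
      field_simp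
      ring
    · refine (min_le_left _ _).trans ?_
      rw [hs₃]
      obtain ⟨j, hj0, hj, hje⟩ := ceil_nat c a ha0 hc0
      obtain ⟨n, hn0, hn, hne⟩ := ceil_nat c b hb0 hc0
      rw [hje, hne]
      refine csInf_le bddV ⟨j, n, 1, hj0, hn0, one_pos, ?_⟩
      unfold brieskornH
      have hjR : (c : ℝ) * (1 : ℕ) ≤ a * j := by push_cast; rw [mul_comm (a : ℝ), mul_one]; exact_mod_cast hj
      have hnR : (c : ℝ) * (1 : ℕ) ≤ b * n := by push_cast; rw [mul_comm (b : ℝ), mul_one]; exact_mod_cast hn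
      rw [min_eq_right hnR, min_eq_right hjR]
      push_cast
      rw [mul_one]
      congr 1
      ring
  · refine le_min ?_ ((min_le_right _ _).trans (min_le_right _ _))
    have D1 : min (min s₁ s₂) (min s₃ 1) ≤ s₁ := (min_le_left _ _).trans (min_le_left _ _)
    have D2 : min (min s₁ s₂) (min s₃ 1) ≤ s₂ := (min_le_left _ _).trans (min_le_right _ _)
    have D3 : min (min s₁ s₂) (min s₃ 1) ≤ s₃ := (min_le_right _ _).trans (min_le_left _ _)
    have D0 : 0 ≤ min (min s₁ s₂) (min s₃ 1) :=
      le_min (le_min s1nn s2nn) (le_min s3nn zero_le_one)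
    generalize min (min s₁ s₂) (min s₃ 1) = D at D0 D1 D2 D3
    have H1 : ∀ k j : ℕ, 1 ≤ k → k * b ≤ c → k * b ≤ j * a → D * (k * b : ℕ) ≤ j + k := by
      intro k j hk hkc hkj
      have hkR : (0 : ℝ) < k := by exact_mod_cast hk
      have h := D1
      rw [hs₁] at h
      have h := h.trans (csInf_le ⟨0, bdd1⟩ ⟨k, hk, (Nat.le_div_iff_mul_le hb0).2 hkc, rfl⟩)
      have hce := ceil_le' (k * b) a j ha0 hkj
      have hpos : (0 : ℝ) < (k * b : ℕ) := by push_cast; positivity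
      calc D * (k * b : ℕ) ≤ _ := mul_le_mul_of_nonneg_right h hpos.le
        _ = k + (⌈((k * b : ℕ) : ℝ) / (a : ℝ)⌉ : ℝ) := by
          rw [add_mul, div_mul_cancel₀ _ hpos.ne']
          congr 1
          push_cast
          field_simp
        _ ≤ j + k := by linarith
    have H2 : ∀ k n : ℕ, 1 ≤ k → k * a ≤ c → k * a ≤ n * b → D * (k * a : ℕ) ≤ k + n := by
      intro k j hk hkc hkj
      have hkR : (0 : ℝ) < k := by exact_mod_cast hk
      have h := D2
      rw [hs₂] at h
      have h := h.trans (csInf_le ⟨0, bdd2⟩ ⟨k, hk, (Nat.le_div_iff_mul_le ha0).2 hkc, rfl⟩)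
      have hce := ceil_le' (k * a) b j hb0 hkj
      have hpos : (0 : ℝ) < (k * a : ℕ) := by push_cast; positivity
      calc D * (k * a : ℕ) ≤ _ := mul_le_mul_of_nonneg_right h hpos.le
        _ = k + (⌈((k * a : ℕ) : ℝ) / (b : ℝ)⌉ : ℝ) := by
          rw [add_mul, div_mul_cancel₀ _ hpos.ne']
          congr 1
          push_cast
          field_simp
        _ ≤ k + j := by linarith
    have H3 : ∀ j n : ℕ, c ≤ j * a → c ≤ n * b → D * c ≤ j + n := by
      intro j n hj hn
      have h := D3
      rw [hs₃, le_div_iff₀ hcR] at h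
      have e1 := ceil_le' c a j ha0 hj
      have e2 := ceil_le' c b n hb0 hn
      linarith
    refine le_csInf neV ?_
    rintro x ⟨p, q, r, hp, hq, hr, rfl⟩
    have hmin : min ((a : ℝ) * p) (min ((b : ℝ) * q) ((c : ℝ) * r)) =
        ((min (p * a) (min (q * b) (r * c)) : ℕ) : ℝ) := by
      push_cast
      rw [mul_comm (a : ℝ), mul_comm (b : ℝ), mul_comm (c : ℝ)]
    have mpos : 0 < min (p * a) (min (q * b) (r * c)) := by
      refine lt_min (by positivity) (lt_min (by positivity) (by positivity))
    unfold brieskornH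
    rw [hmin, le_div_iff₀ (by exact_mod_cast mpos)]
    have m1 : min (p * a) (min (q * b) (r * c)) ≤ p * a := min_le_left _ _
    have m2 : min (p * a) (min (q * b) (r * c)) ≤ q * b := (min_le_right _ _).trans (min_le_left _ _)
    have m3 : min (p * a) (min (q * b) (r * c)) ≤ r * c := (min_le_right _ _).trans (min_le_right _ _)
    have m4 : min (p * a) (min (q * b) (r * c)) = p * a ∨
        min (p * a) (min (q * b) (r * c)) = q * b ∨ min (p * a) (min (q * b) (r * c)) = r * c := by
      omega
    generalize min (p * a) (min (q * b) (r * c)) = m at *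
    obtain ⟨s, rfl⟩ : ∃ s, r = s + 1 := ⟨r - 1, by omega⟩
    have goal : D * m ≤ p + q + s := by
      rcases Nat.eq_zero_or_pos s with rfl | hs
      · simp only [zero_add, one_mul] at m3 m4
        rcases m4 with rfl | rfl | rfl
        · have := H2 p q hp m3 m2
          simpa using this
        · have := H1 q p hq m3 m1
          simpa using this
        · have := H3 p q m1 m2
          simpa using this
      · exact core a b c ha0 hab hbc D D0 H1 H2 H3 m p q s m1 m2 hs m3
    push_cast
    linarith
end
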